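/- Let φ : ℝ/ℤ → ℝ be a bounded Borel (real-valued) function and let J be a nonempty finite subset of ℤ. Then T_J(φ)² ≤ T_J(φ²) in the Loewner order, i.e. the matrix T_J(φ²) − T_J(φ)·T_J(φ) is positive semidefinite. -/

import Mathlib

open MeasureTheory Matrix
open scoped ComplexOrder

/-- The `n`-th Fourier coefficient of a function on the circle `ℝ/ℤ`. -/
noncomputable def fhat (φ : AddCircle (1:ℝ) → ℝ) (n : ℤ) : ℂ :=
  fourierCoeff (fun t => (φ t : ℂ)) n

/-- The matrix `T_J(φ) = (φ̂(i-j))_{i,j ∈ J}` indexed by a finite subset `J ⊂ ℤ`. -/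
noncomputable def TJ (φ : AddCircle (1:ℝ) → ℝ) (J : Finset ℤ) : Matrix J J ℂ :=
  Matrix.of fun i j => fhat φ ((i : ℤ) - (j : ℤ))

/-!
Write `e n` for the `n`-th character of the circle. The entries of `T_J(φ)` are the inner products
`⟪e i, φ * e j⟫` in `L²`, and those of `T_J(|φ|²)` are `⟪φ * e i, φ * e j⟫`. Hence
`T_J(|φ|²) - T_J(φ)ᴴ * T_J(φ)` is the Gram matrix of the components of the vectors `φ * e j`
orthogonal to the span of the `e i` with `i ∈ J`. For real `φ` the matrix `T_J(φ)` is Hermitian.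
-/

open AddCircle
open scoped ComplexConjugate InnerProductSpace

section Gram

variable {𝕜 E ι κ : Type*} [RCLike 𝕜] [SeminormedAddCommGroup E]
  [InnerProductSpace 𝕜 E] [Fintype ι]

theorem inner_sub_sum_inner_smul_sub_sum_inner_smul {e : ι → E} (he : Orthonormal 𝕜 e) (x y : E) :
    ⟪x - ∑ k, ⟪e k, x⟫_𝕜 • e k, y - ∑ k, ⟪e k, y⟫_𝕜 • e k⟫_𝕜 =
      ⟪x, y⟫_𝕜 - ∑ k, ⟪x, e k⟫_𝕜 * ⟪e k, y⟫_𝕜 := by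
  have residual_orthogonal (k : ι) : ⟪e k, y - ∑ l, ⟪e l, y⟫_𝕜 • e l⟫_𝕜 = 0 := by
    rw [inner_sub_right, he.inner_right_fintype, sub_self]
  rw [inner_sub_left, sum_inner]
  simp only [inner_smul_left, residual_orthogonal, mul_zero, Finset.sum_const_zero, sub_zero]
  simp only [inner_sub_right, inner_sum, inner_smul_right, mul_comm]

/-- The Gram matrix form of Bessel's inequality. -/
theorem posSemidef_gram_sub_conjTranspose_mul_self [Finite κ] {e : ι → E} (he : Orthonormal 𝕜 e)
    (v : κ → E) :
    (gram 𝕜 v - (of fun i j ↦ ⟪e i, v j⟫_𝕜)ᴴ * of fun i j ↦ ⟪e i, v j⟫_𝕜).PosSemidef := by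
  convert posSemidef_gram 𝕜 fun j ↦ v j - ∑ k, ⟪e k, v j⟫_𝕜 • e k using 1
  ext i j
  simp [mul_apply, inner_sub_sum_inner_smul_sub_sum_inner_smul he]

end Gram

theorem inner_toLp_toLp {α 𝕜 : Type*} [MeasurableSpace α] {μ : Measure α} [RCLike 𝕜]
    {f g : α → 𝕜} (hf : MemLp f 2 μ) (hg : MemLp g 2 μ) :
    ⟪hf.toLp f, hg.toLp g⟫_𝕜 = ∫ t, conj (f t) * g t ∂μ := by
  rw [L2.inner_def]
  refine integral_congr_ae ?_
  filter_upwards [hf.coeFn_toLp, hg.coeFn_toLp] with t hft hgt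
  rw [hft, hgt, RCLike.inner_apply']

section Circle

variable {T : ℝ} [Fact (0 < T)]

theorem fourierCoeff_fourier_smul {E : Type*} [NormedAddCommGroup E] [NormedSpace ℂ E]
    (f : AddCircle T → E) (m n : ℤ) :
    fourierCoeff (fun t ↦ fourier m t • f t) n = fourierCoeff f (n - m) := by
  simp only [fourierCoeff, smul_smul, ← fourier_add, neg_sub, neg_add_eq_sub]

theorem fourierCoeff_conj (f : AddCircle T → ℂ) (n : ℤ) :
    fourierCoeff (fun t ↦ conj (f t)) n = conj (fourierCoeff f (-n)) := by
  simp only [fourierCoeff, ← integral_conj, smul_eq_mul, map_mul, ← fourier_neg, neg_neg]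

theorem memLp_fourier_smul {E : Type*} [NormedAddCommGroup E] [NormedSpace ℂ E]
    {f : AddCircle T → E} {p : ENNReal} (hf : MemLp f p haarAddCircle) (n : ℤ) :
    MemLp (fun t ↦ fourier n t • f t) p haarAddCircle :=
  hf.congr_norm ((fourier n).continuous.aestronglyMeasurable.smul hf.aestronglyMeasurable)
    (.of_forall fun t ↦ by rw [norm_smul, fourier_apply, Circle.norm_coe, one_mul])

theorem inner_fourierLp_toLp {f : AddCircle T → ℂ} (hf : MemLp f 2 haarAddCircle) (n : ℤ) :
    ⟪fourierLp 2 n, hf.toLp f⟫_ℂ = fourierCoeff f n := by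
  rw [← coe_fourierBasis, ← HilbertBasis.repr_apply_apply, fourierBasis_repr]
  rw [fourierCoeff_congr_ae hf.coeFn_toLp]

theorem inner_toLp_fourier_smul_toLp_fourier_smul {f : AddCircle T → ℂ}
    (hf : MemLp f 2 haarAddCircle) (m n : ℤ) :
    ⟪(memLp_fourier_smul hf m).toLp _, (memLp_fourier_smul hf n).toLp _⟫_ℂ =
      fourierCoeff (fun t ↦ (‖f t‖ : ℂ) ^ 2) (m - n) := by
  rw [inner_toLp_toLp, fourierCoeff]
  congr 1 with t
  have fourier_neg_sub : fourier (-(m - n)) t = conj (fourier m t) * fourier n t := by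
    rw [neg_sub, sub_eq_add_neg, fourier_add, fourier_neg, mul_comm]
  rw [fourier_neg_sub, ← Complex.conj_mul', smul_eq_mul, smul_eq_mul, smul_eq_mul, map_mul]
  ring

/-- The Toeplitz matrix with symbol `φ`, truncated to the indices in `J`. It extends `TJ` to
complex-valued symbols and to circles of arbitrary length. -/
noncomputable def toeplitzMatrix (φ : AddCircle T → ℂ) (J : Finset ℤ) : Matrix J J ℂ :=
  of fun i j ↦ fourierCoeff φ (i - j)

theorem conjTranspose_toeplitzMatrix (φ : AddCircle T → ℂ) (J : Finset ℤ) :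
    (toeplitzMatrix φ J)ᴴ = toeplitzMatrix (fun t ↦ conj (φ t)) J := by
  ext i j
  simp [toeplitzMatrix, fourierCoeff_conj]

theorem toeplitzMatrix_eq_inner {φ : AddCircle T → ℂ} (hφ : MemLp φ 2 haarAddCircle)
    (J : Finset ℤ) :
    toeplitzMatrix φ J =
      of fun i j : J ↦ ⟪fourierLp 2 (i : ℤ), (memLp_fourier_smul hφ j).toLp _⟫_ℂ := by
  ext i j
  simp only [toeplitzMatrix, of_apply, inner_fourierLp_toLp, fourierCoeff_fourier_smul]

theorem toeplitzMatrix_norm_sq_eq_gram {φ : AddCircle T → ℂ} (hφ : MemLp φ 2 haarAddCircle)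
    (J : Finset ℤ) :
    toeplitzMatrix (fun t ↦ (‖φ t‖ : ℂ) ^ 2) J =
      gram ℂ fun j : J ↦ (memLp_fourier_smul hφ j).toLp _ := by
  ext i j
  exact (inner_toLp_fourier_smul_toLp_fourier_smul hφ i j).symm

theorem TJ_sq_le_TJ_sq_general {φ : AddCircle T → ℂ} (hφ : MemLp φ 2 haarAddCircle)
    (J : Finset ℤ) :
    (toeplitzMatrix (fun t ↦ (‖φ t‖ : ℂ) ^ 2) J -
      (toeplitzMatrix φ J)ᴴ * toeplitzMatrix φ J).PosSemidef := by
  rw [toeplitzMatrix_norm_sq_eq_gram hφ, toeplitzMatrix_eq_inner hφ]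
  exact posSemidef_gram_sub_conjTranspose_mul_self
    (orthonormal_fourier.comp _ Subtype.val_injective) _

end Circle

theorem TJ_eq_toeplitzMatrix (φ : AddCircle (1 : ℝ) → ℝ) (J : Finset ℤ) :
    TJ φ J = toeplitzMatrix (fun t ↦ (φ t : ℂ)) J := rfl

theorem isHermitian_TJ (φ : AddCircle (1 : ℝ) → ℝ) (J : Finset ℤ) : (TJ φ J).IsHermitian := by
  simp only [IsHermitian, TJ_eq_toeplitzMatrix, conjTranspose_toeplitzMatrix, Complex.conj_ofReal]

/-- For a bounded real Borel function `φ` and a nonempty finite `J ⊂ ℤ`,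
`T_J(φ)² ≤ T_J(φ²)` in the Loewner order. -/
theorem TJ_sq_le_TJ_sq
    (φ : AddCircle (1:ℝ) → ℝ) (hmeas : Measurable φ) (C : ℝ) (hbd : ∀ t, |φ t| ≤ C)
    (J : Finset ℤ) (hJ : J.Nonempty) :
    (TJ (fun t => (φ t) ^ 2) J - TJ φ J * TJ φ J).PosSemidef := by
  have hφ : MemLp φ 2 haarAddCircle := .of_bound hmeas.aestronglyMeasurable C (.of_forall hbd)
  simpa [← Complex.ofReal_pow, ← TJ_eq_toeplitzMatrix, (isHermitian_TJ φ J).eq] using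
    TJ_sq_le_TJ_sq_general hφ.ofReal J
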